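/- Let N ≥ 1, let p > 1 and r be real numbers with 1 ≤ r ≤ p, and let A : ℝ^N → ℝ be strictly convex, positively p-homogeneous, and differentiable on ℝ^N; set a(ξ) = (1/p) • ∇A(ξ). Then for every s > 0 and all ξ₁, ξ₂ ∈ ℝ^N one has ⟨a(ξ₂), ξ₂ − r·s^(r−1) • ξ₁ + (r−1)·s^r • ξ₂⟩ ≥ (r/p) · (A(ξ₂) − A(ξ₁)). -/

import Mathlib

open Real
open scoped RealInnerProductSpace

/-!
For `r = 1` the claim is the tangent inequality of `A` at `ξ₂`. For `r > 1`, write `X = A ξ₂`,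
`Y = A ξ₁`, and let `q` be the conjugate exponent of `p`. The tangent inequality, tested at
`c ^ (1 - q) • ξ₁` and rewritten with Euler's identity `A'(ξ₂) ξ₂ = p * X`, becomes after
multiplication by `c ^ q` the Young-type bound `c * A'(ξ₂) ξ₁ ≤ Y + (p - 1) * c ^ q * X`.
For `c = s ^ (r - 1)` the exponent `(r - 1) * q` of `s` lies between `0` and `r`, so the weighted
AM-GM inequality bounds `c ^ q` by a combination of `1` and `s ^ r`; as `X ≥ 0`, the result follows.
-/

lemma add_fderiv_apply_sub_le_of_convexOn {E : Type*} [NormedAddCommGroup E] [NormedSpace ℝ E]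
    {S : Set E} {f : E → ℝ} {f' : E →L[ℝ] ℝ} {x y : E} (hf : ConvexOn ℝ S f)
    (hx : x ∈ S) (hy : y ∈ S) (hf' : HasFDerivWithinAt f f' S x) :
    f x + f' (y - x) ≤ f y := by
  let line : ℝ →ᵃ[ℝ] E := AffineMap.lineMap x y
  have hline : HasDerivWithinAt (f ∘ line) (f' (y - x)) (line ⁻¹' S) 0 :=
    HasFDerivWithinAt.comp_hasDerivWithinAt 0 (by simpa [line] using hf')
      AffineMap.hasDerivWithinAt_lineMap (Set.mapsTo_preimage _ _)
  have hslope := (hf.comp_affineMap line).le_slope_of_hasDerivWithinAt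
    (by simpa [line] using hx) (by simpa [line] using hy) one_pos hline
  simp only [slope_def_field, Function.comp_apply, line, AffineMap.lineMap_apply_one,
    AffineMap.lineMap_apply_zero, sub_zero, div_one] at hslope
  linarith

/-- Positive `p`-homogeneity of a map between real vector spaces, for a real exponent `p`. The
scalar `t = 0` is included, so that `f 0 = 0` whenever `p ≠ 0`. -/
def IsPosHomogeneous {E F : Type*} [AddCommGroup E] [Module ℝ E] [AddCommGroup F] [Module ℝ F]
    (p : ℝ) (f : E → F) : Prop :=
  ∀ t : ℝ, 0 ≤ t → ∀ x : E, f (t • x) = t ^ p • f x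

namespace IsPosHomogeneous

lemma map_zero {E F : Type*} [AddCommGroup E] [Module ℝ E] [AddCommGroup F] [Module ℝ F]
    {p : ℝ} {f : E → F} (hf : IsPosHomogeneous p f) (hp : p ≠ 0) : f 0 = 0 := by
  simpa [zero_rpow hp] using hf 0 le_rfl 0

lemma nonneg_of_convexOn {E : Type*} [AddCommGroup E] [Module ℝ E] {p : ℝ} {f : E → ℝ}
    (hf : IsPosHomogeneous p f) (hp : 1 < p) (hconv : ConvexOn ℝ Set.univ f) (x : E) :
    0 ≤ f x := by
  have hmid : (1 / 2 : ℝ) ^ p * f x ≤ 1 / 2 * f x := by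
    have hhalf : (0 : ℝ) ≤ 1 / 2 := by norm_num
    have h := hconv.2 (Set.mem_univ x) (Set.mem_univ 0) hhalf hhalf (add_halves 1)
    rwa [smul_zero, add_zero, hf _ (by norm_num), hf.map_zero (by linarith), smul_zero,
      add_zero] at h
  have hpow : (1 / 2 : ℝ) ^ p < 1 / 2 :=
    rpow_lt_self_of_lt_one (by norm_num) (by norm_num) hp
  exact (mul_nonneg_iff_of_pos_left (sub_pos.2 hpow)).1 (by linarith)

lemma fderiv_apply_self {E F : Type*} [NormedAddCommGroup E] [NormedSpace ℝ E]
    [NormedAddCommGroup F] [NormedSpace ℝ F] {p : ℝ} {f : E → F} {f' : E →L[ℝ] F} {x : E}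
    (hf : IsPosHomogeneous p f) (hf' : HasFDerivAt f f' x) : f' x = p • f x := by
  have hray : HasDerivAt (fun t : ℝ => f (t • x)) (f' x) 1 := by
    have hsmul : HasDerivAt (fun t : ℝ => t • x) x 1 := by
      simpa using (hasDerivAt_id (1 : ℝ)).smul_const x
    exact HasFDerivAt.comp_hasDerivAt 1 (by simpa using hf') hsmul
  have hpow : HasDerivAt (fun t : ℝ => t ^ p • f x) (p • f x) 1 := by
    simpa using (hasDerivAt_rpow_const (p := p) (Or.inl one_ne_zero)).smul_const (f x)
  refine hray.unique (hpow.congr_of_eventuallyEq ?_)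
  filter_upwards [lt_mem_nhds one_pos] with t ht using hf t ht.le x

variable {E : Type*} [NormedAddCommGroup E] [NormedSpace ℝ E]
  {p : ℝ} {f : E → ℝ} {f' : E →L[ℝ] ℝ} {x : E}

lemma fderiv_apply_le (hf : IsPosHomogeneous p f) (hconv : ConvexOn ℝ Set.univ f)
    (hf' : HasFDerivAt f f' x) (y : E) : f' y ≤ f y + (p - 1) * f x := by
  have htangent := add_fderiv_apply_sub_le_of_convexOn hconv (Set.mem_univ x) (Set.mem_univ y)
    hf'.hasFDerivWithinAt
  rw [map_sub, hf.fderiv_apply_self hf', smul_eq_mul] at htangent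
  linarith

lemma mul_fderiv_apply_le {q c : ℝ} (hf : IsPosHomogeneous p f) (hpq : p.HolderConjugate q)
    (hconv : ConvexOn ℝ Set.univ f) (hf' : HasFDerivAt f f' x) (hc : 0 < c) (y : E) :
    c * f' y ≤ f y + (p - 1) * c ^ q * f x := by
  have hlin : c ^ q * c ^ (1 - q) = c := by
    rw [← rpow_add hc, add_sub_cancel, rpow_one]
  have hhom : c ^ q * (c ^ (1 - q)) ^ p = 1 := by
    rw [← rpow_mul hc.le, ← rpow_add hc,
      show q + (1 - q) * p = 0 by linear_combination -hpq.mul_eq_add, rpow_zero]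
  calc c * f' y = c ^ q * f' (c ^ (1 - q) • y) := by
        rw [map_smul, smul_eq_mul, ← mul_assoc, hlin]
    _ ≤ c ^ q * (f (c ^ (1 - q) • y) + (p - 1) * f x) := by
        gcongr
        exact hf.fderiv_apply_le hconv hf' _
    _ = f y + (p - 1) * c ^ q * f x := by
        rw [hf _ (rpow_nonneg hc.le _), smul_eq_mul]
        linear_combination f y * hhom

end IsPosHomogeneous

lemma mul_rpow_sub_one_mul_le {p q r s : ℝ} (hpq : p.HolderConjugate q) (hr : 1 ≤ r) (hrp : r ≤ p)
    (hs : 0 ≤ s) : r * (p - 1) * s ^ ((r - 1) * q) ≤ p - r + p * (r - 1) * s ^ r := by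
  have hp : 0 < p - 1 := hpq.sub_one_pos
  have hden : 0 < r * (p - 1) := by positivity
  have hamgm := geom_mean_le_arith_mean2_weighted
    (w₁ := (p - r) / (r * (p - 1))) (w₂ := p * (r - 1) / (r * (p - 1)))
    (div_nonneg (by linarith) hden.le)
    (div_nonneg (mul_nonneg hpq.nonneg (by linarith)) hden.le)
    zero_le_one (rpow_nonneg hs r) (by field_simp; ring)
  have hexp : r * (p * (r - 1) / (r * (p - 1))) = (r - 1) * q := by
    rw [hpq.conjugate_eq]
    field_simp
  rw [one_rpow, one_mul, mul_one, ← rpow_mul hs, hexp] at hamgm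
  calc r * (p - 1) * s ^ ((r - 1) * q)
      ≤ r * (p - 1) * ((p - r) / (r * (p - 1)) + p * (r - 1) / (r * (p - 1)) * s ^ r) := by
        gcongr
    _ = p - r + p * (r - 1) * s ^ r := by field_simp

theorem diaz_saa_young_pointwise_general {E : Type*} [NormedAddCommGroup E] [NormedSpace ℝ E]
    {p r s : ℝ} (hr : 1 ≤ r) (hrp : r ≤ p) {A : E → ℝ} {A' : E →L[ℝ] ℝ} {ξ₂ : E}
    (hconv : ConvexOn ℝ Set.univ A) (hhom : IsPosHomogeneous p A) (hA' : HasFDerivAt A A' ξ₂)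
    (hs : 0 < s) (ξ₁ : E) :
    r / p * (A ξ₂ - A ξ₁) ≤
      ((1 / p) • A') (ξ₂ - (r * s ^ (r - 1)) • ξ₁ + ((r - 1) * s ^ r) • ξ₂) := by
  have hp : 0 < p := by linarith
  have heuler : A' ξ₂ = p * A ξ₂ := hhom.fderiv_apply_self hA'
  suffices h : r * (A ξ₂ - A ξ₁) ≤
      (1 + (r - 1) * s ^ r) * (p * A ξ₂) - r * (s ^ (r - 1) * A' ξ₁) by
    simp only [smul_apply, map_add, map_sub, map_smul, smul_eq_mul, heuler]
    linear_combination (1 / p) * h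
  obtain rfl | hr₁ := hr.eq_or_lt
  · have := hhom.fderiv_apply_le hconv hA' ξ₁
    simp only [sub_self, rpow_zero]
    linarith
  have hpq := HolderConjugate.conjExponent (hr₁.trans_le hrp)
  have hyoung := hhom.mul_fderiv_apply_le hpq hconv hA' (rpow_pos_of_pos hs (r - 1)) ξ₁
  rw [← rpow_mul hs.le] at hyoung
  have hpower := mul_le_mul_of_nonneg_right (mul_rpow_sub_one_mul_le hpq hr hrp hs.le)
    (hhom.nonneg_of_convexOn hpq.lt hconv ξ₂)
  linear_combination r * hyoung + hpower

theorem diaz_saa_young_pointwise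
    (N : ℕ) (hN : 1 ≤ N) (p r : ℝ) (hp : 1 < p) (hr : 1 ≤ r) (hrp : r ≤ p)
    (A : EuclideanSpace ℝ (Fin N) → ℝ)
    (hconv : StrictConvexOn ℝ Set.univ A)
    (hhom : ∀ t : ℝ, 0 ≤ t → ∀ ξ : EuclideanSpace ℝ (Fin N), A (t • ξ) = t ^ p * A ξ)
    (hdiff : Differentiable ℝ A)
    (s : ℝ) (hs : 0 < s) (ξ₁ ξ₂ : EuclideanSpace ℝ (Fin N)) :
    ⟪(1/p) • gradient A ξ₂, ξ₂ - (r * s ^ (r - 1)) • ξ₁ + ((r - 1) * s ^ r) • ξ₂⟫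
      ≥ (r/p) * (A ξ₂ - A ξ₁) := by
  rw [real_inner_smul_left]
  exact diaz_saa_young_pointwise_general hr hrp hconv.convexOn hhom
    (hdiff ξ₂).hasGradientAt.hasFDerivAt hs ξ₁
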